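/- arXiv:1807.08999 — 3 statements merged into one kernel-verified Lean document; each statement's English description precedes it below -/
import Mathlib

section
/- Let c₁, c₂ > 0, let z, h be real, and let S₁, S₂, S₃, S₄ > 0. Let S = diag(S₁, S₂, S₃, S₄), let H be the 4×4 real matrix with rows (0, c₁, 1, 0), (1−z, 0, 0, 0), (0, 0, 0, 1−c₂h), (0, −c₂, 1, 0), and let G be the 4×4 real matrix with rows (1+z, 0, 0, 0), (0, −c₁, 1, 0), (0, c₂, 1, 0), (0, 0, 0, 1+c₂h); define Ψ̃(c₁,z) = HᵀSH − GᵀSG. Then Ψ̃(c₁,z) is negative definite if and only if the following three conditions hold: (i) Φ(z) := S₂(z−1)² − S₁(z+1)² < 0; (ii) the symmetric 2×2 matrix Θ(c₁) with entries Θ₁₁ = (S₁−S₂)c₁² − (S₃−S₄)c₂², Θ₁₂ = Θ₂₁ = (S₁+S₂)c₁ − (S₃+S₄)c₂, Θ₂₂ = S₁−S₂−S₃+S₄ is negative definite; and (iii) Ξ := S₃(1−c₂h)² − S₄(1+c₂h)² < 0. -/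
/-! Each row of `H` and of `G` is supported in one of the coordinate blocks (1), (2,3), (4). Since
`S` is diagonal, the forms of `HᵀSH` and `GᵀSG` are weighted sums of squares of these rows, so both
matrices are block diagonal and so is their difference. A block-diagonal matrix is negative definite
exactly when each block is. -/

open Matrix

/-- A real square matrix `M` is negative definite if `ξᵀMξ < 0` for every nonzero `ξ`. -/
def NegDef {n : ℕ} (M : Matrix (Fin n) (Fin n) ℝ) : Prop :=
  ∀ ξ : Fin n → ℝ, ξ ≠ 0 → ξ ⬝ᵥ M.mulVec ξ < 0

/-- The block-diagonal matrix `diag(A, D)`, indexed by `Fin (m + n)` rather than `Fin m ⊕ Fin n`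
so that `NegDef` applies to it; the coordinates of `A` come first. -/
def blockSum {R : Type*} [Zero R] {m n : ℕ} (A : Matrix (Fin m) (Fin m) R)
    (D : Matrix (Fin n) (Fin n) R) : Matrix (Fin (m + n)) (Fin (m + n)) R :=
  reindex finSumFinEquiv finSumFinEquiv (fromBlocks A 0 0 D)

theorem append_dotProduct_blockSum_mulVec_append {R : Type*} [NonUnitalNonAssocSemiring R]
    {m n : ℕ} (A : Matrix (Fin m) (Fin m) R) (D : Matrix (Fin n) (Fin n) R)
    (u : Fin m → R) (v : Fin n → R) :
    Fin.append u v ⬝ᵥ blockSum A D *ᵥ Fin.append u v = u ⬝ᵥ A *ᵥ u + v ⬝ᵥ D *ᵥ v := by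
  have append_comp : Fin.append u v ∘ finSumFinEquiv = Sum.elim u v := by
    ext (i | j) <;> simp
  rw [blockSum, reindex_apply, submatrix_mulVec_equiv, Equiv.symm_symm, dotProduct_comp_equiv_symm,
    append_comp, fromBlocks_mulVec, sumElim_dotProduct_sumElim]
  simp only [Sum.elim_comp_inl, Sum.elim_comp_inr, zero_mulVec, add_zero, zero_add]

theorem append_eq_zero_iff {R : Type*} [Zero R] {m n : ℕ} {u : Fin m → R} {v : Fin n → R} :
    Fin.append u v = 0 ↔ u = 0 ∧ v = 0 := by
  simp only [funext_iff, Fin.forall_fin_add, Fin.append_left, Fin.append_right, Pi.zero_apply]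

theorem NegDef.dotProduct_mulVec_nonpos {n : ℕ} {M : Matrix (Fin n) (Fin n) ℝ} (hM : NegDef M)
    (ξ : Fin n → ℝ) : ξ ⬝ᵥ M *ᵥ ξ ≤ 0 := by
  obtain rfl | hξ := eq_or_ne ξ 0
  · rw [zero_dotProduct]
  · exact (hM ξ hξ).le

theorem negDef_blockSum_iff {m n : ℕ} {A : Matrix (Fin m) (Fin m) ℝ}
    {D : Matrix (Fin n) (Fin n) ℝ} : NegDef (blockSum A D) ↔ NegDef A ∧ NegDef D := by
  refine ⟨fun hAD ↦ ⟨fun u hu ↦ ?_, fun v hv ↦ ?_⟩, fun ⟨hA, hD⟩ ξ hξ ↦ ?_⟩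
  · have := hAD (Fin.append u 0) fun h ↦ hu (append_eq_zero_iff.1 h).1
    rwa [append_dotProduct_blockSum_mulVec_append, zero_dotProduct, add_zero] at this
  · have := hAD (Fin.append 0 v) fun h ↦ hv (append_eq_zero_iff.1 h).2
    rwa [append_dotProduct_blockSum_mulVec_append, zero_dotProduct, zero_add] at this
  · obtain ⟨u, v, rfl⟩ : ∃ u v, Fin.append u v = ξ := ⟨_, _, Fin.append_castAdd_natAdd⟩
    rw [append_dotProduct_blockSum_mulVec_append]
    obtain rfl | hu := eq_or_ne u 0
    · have hv : v ≠ 0 := fun hv ↦ hξ (append_eq_zero_iff.2 ⟨rfl, hv⟩)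
      rw [zero_dotProduct, zero_add]
      exact hD v hv
    · exact add_neg_of_neg_of_nonpos (hA u hu) (hD.dotProduct_mulVec_nonpos v)

theorem negDef_fin_one_iff {a : ℝ} : NegDef !![a] ↔ a < 0 := by
  have form_eq (ξ : Fin 1 → ℝ) : ξ ⬝ᵥ !![a] *ᵥ ξ = a * ξ 0 ^ 2 := by
    simp only [dotProduct, mulVec, Fin.sum_univ_one, of_apply, cons_val_fin_one]
    ring
  refine ⟨fun ha ↦ ?_, fun ha ξ hξ ↦ ?_⟩
  · simpa only [form_eq, Pi.one_apply, one_pow, mul_one] using ha 1 one_ne_zero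
  · have hξ₀ : ξ 0 ≠ 0 := fun h ↦ hξ (funext (Fin.forall_fin_one.2 h))
    rw [form_eq]
    exact mul_neg_of_neg_of_pos ha (by positivity)

theorem blockSum_fin_four {R : Type*} [Zero R] (a b₁₁ b₁₂ b₂₁ b₂₂ d : R) :
    blockSum !![a] (blockSum !![b₁₁, b₁₂; b₂₁, b₂₂] !![d]) =
      !![a, 0, 0, 0; 0, b₁₁, b₁₂, 0; 0, b₂₁, b₂₂, 0; 0, 0, 0, d] := by
  ext i j
  fin_cases i <;> fin_cases j <;> rfl

theorem transpose_mul_diagonal_mul_apply {R : Type*} [CommSemiring R] {m n : Type*} [Fintype m]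
    [DecidableEq m] (A : Matrix m n R) (d : m → R) (i j : n) :
    (Aᵀ * diagonal d * A) i j = ∑ k, d k * (A k i * A k j) := by
  simp only [mul_apply (M := Aᵀ * diagonal d), mul_diagonal, transpose_apply]
  exact Finset.sum_congr rfl fun k _ ↦ by ring

section StabilityMatrix

variable {R : Type*} [CommRing R]

/-- The matrix `H` of the stability LMI at `q = 0`. -/
def matrixH (c₁ c₂ z h : R) : Matrix (Fin 4) (Fin 4) R :=
  !![0, c₁, 1, 0;
     1 - z, 0, 0, 0;
     0, 0, 0, 1 - c₂ * h;
     0, -c₂, 1, 0]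

/-- The matrix `G` of the stability LMI at `q = 0`. -/
def matrixG (c₁ c₂ z h : R) : Matrix (Fin 4) (Fin 4) R :=
  !![1 + z, 0, 0, 0;
     0, -c₁, 1, 0;
     0, c₂, 1, 0;
     0, 0, 0, 1 + c₂ * h]

/-- The matrix `Ψ̃(c₁, z) = HᵀSH − GᵀSG` of the stability LMI, at `q = 0` and decay rate zero. -/
def psiTilde (c₁ c₂ z h S₁ S₂ S₃ S₄ : R) : Matrix (Fin 4) (Fin 4) R :=
  (matrixH c₁ c₂ z h)ᵀ * diagonal ![S₁, S₂, S₃, S₄] * matrixH c₁ c₂ z h -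
    (matrixG c₁ c₂ z h)ᵀ * diagonal ![S₁, S₂, S₃, S₄] * matrixG c₁ c₂ z h

/-- The block `Φ(z)` of `psiTilde` on the coordinate (1), as a scalar. -/
def phiBlock (z S₁ S₂ : R) : R :=
  S₂ * (z - 1) ^ 2 - S₁ * (z + 1) ^ 2

/-- The block `Θ(c₁)` of `psiTilde` on the coordinates (2,3). -/
def thetaBlock (c₁ c₂ S₁ S₂ S₃ S₄ : R) : Matrix (Fin 2) (Fin 2) R :=
  !![(S₁ - S₂) * c₁ ^ 2 - (S₃ - S₄) * c₂ ^ 2, (S₁ + S₂) * c₁ - (S₃ + S₄) * c₂;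
     (S₁ + S₂) * c₁ - (S₃ + S₄) * c₂, S₁ - S₂ - S₃ + S₄]

/-- The block `Ξ` of `psiTilde` on the coordinate (4), as a scalar. -/
def xiBlock (c₂ h S₃ S₄ : R) : R :=
  S₃ * (1 - c₂ * h) ^ 2 - S₄ * (1 + c₂ * h) ^ 2

theorem matrixH_transpose_mul_diagonal_mul (c₁ c₂ z h S₁ S₂ S₃ S₄ : R) :
    (matrixH c₁ c₂ z h)ᵀ * diagonal ![S₁, S₂, S₃, S₄] * matrixH c₁ c₂ z h =
      !![S₂ * (1 - z) ^ 2, 0, 0, 0;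
         0, S₁ * c₁ ^ 2 + S₄ * c₂ ^ 2, S₁ * c₁ - S₄ * c₂, 0;
         0, S₁ * c₁ - S₄ * c₂, S₁ + S₄, 0;
         0, 0, 0, S₃ * (1 - c₂ * h) ^ 2] := by
  ext i j
  rw [transpose_mul_diagonal_mul_apply, Fin.sum_univ_four]
  fin_cases i <;> fin_cases j <;>
    simp only [matrixH, of_apply, cons_val, Fin.zero_eta, Fin.mk_one, Fin.reduceFinMk] <;> ring

theorem matrixG_transpose_mul_diagonal_mul (c₁ c₂ z h S₁ S₂ S₃ S₄ : R) :
    (matrixG c₁ c₂ z h)ᵀ * diagonal ![S₁, S₂, S₃, S₄] * matrixG c₁ c₂ z h =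
      !![S₁ * (1 + z) ^ 2, 0, 0, 0;
         0, S₂ * c₁ ^ 2 + S₃ * c₂ ^ 2, S₃ * c₂ - S₂ * c₁, 0;
         0, S₃ * c₂ - S₂ * c₁, S₂ + S₃, 0;
         0, 0, 0, S₄ * (1 + c₂ * h) ^ 2] := by
  ext i j
  rw [transpose_mul_diagonal_mul_apply, Fin.sum_univ_four]
  fin_cases i <;> fin_cases j <;>
    simp only [matrixG, of_apply, cons_val, Fin.zero_eta, Fin.mk_one, Fin.reduceFinMk] <;> ring

theorem psiTilde_eq_blockSum (c₁ c₂ z h S₁ S₂ S₃ S₄ : R) :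
    psiTilde c₁ c₂ z h S₁ S₂ S₃ S₄ =
      blockSum !![phiBlock z S₁ S₂]
        (blockSum (thetaBlock c₁ c₂ S₁ S₂ S₃ S₄) !![xiBlock c₂ h S₃ S₄]) := by
  rw [psiTilde, matrixH_transpose_mul_diagonal_mul, matrixG_transpose_mul_diagonal_mul, thetaBlock,
    blockSum_fin_four]
  ext i j
  fin_cases i <;> fin_cases j <;>
    simp only [phiBlock, xiBlock, Matrix.sub_apply, of_apply, cons_val, Fin.zero_eta,
      Fin.mk_one, Fin.reduceFinMk] <;>
    ring

end StabilityMatrix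

theorem psiTilde_negdef_iff_blocks_general (c₁ c₂ z h S₁ S₂ S₃ S₄ : ℝ) :
    NegDef (psiTilde c₁ c₂ z h S₁ S₂ S₃ S₄) ↔
      phiBlock z S₁ S₂ < 0 ∧ NegDef (thetaBlock c₁ c₂ S₁ S₂ S₃ S₄) ∧ xiBlock c₂ h S₃ S₄ < 0 := by
  rw [psiTilde_eq_blockSum, negDef_blockSum_iff, negDef_blockSum_iff, negDef_fin_one_iff,
    negDef_fin_one_iff]

/-- Block-diagonal characterization of the stability matrix `Ψ̃ = HᵀSH − GᵀSG`:
it is negative definite iff `Φ(z) < 0`, the 2×2 block `Θ(c₁)` is negative definite,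
and `Ξ < 0`. -/
theorem psiTilde_negdef_iff_blocks
    (c₁ c₂ z h S₁ S₂ S₃ S₄ : ℝ) (hc₁ : 0 < c₁) (hc₂ : 0 < c₂)
    (hS₁ : 0 < S₁) (hS₂ : 0 < S₂) (hS₃ : 0 < S₃) (hS₄ : 0 < S₄)
    (S : Matrix (Fin 4) (Fin 4) ℝ)
    (hS : S = Matrix.diagonal ![S₁, S₂, S₃, S₄])
    (H : Matrix (Fin 4) (Fin 4) ℝ)
    (hH : H = !![0, c₁, 1, 0;
                 1 - z, 0, 0, 0;
                 0, 0, 0, 1 - c₂ * h;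
                 0, -c₂, 1, 0])
    (G : Matrix (Fin 4) (Fin 4) ℝ)
    (hG : G = !![1 + z, 0, 0, 0;
                 0, -c₁, 1, 0;
                 0, c₂, 1, 0;
                 0, 0, 0, 1 + c₂ * h])
    (Ψ : Matrix (Fin 4) (Fin 4) ℝ)
    (hΨ : Ψ = Hᵀ * S * H - Gᵀ * S * G)
    (Θ : Matrix (Fin 2) (Fin 2) ℝ)
    (hΘ : Θ = !![(S₁ - S₂) * c₁ ^ 2 - (S₃ - S₄) * c₂ ^ 2,
                 (S₁ + S₂) * c₁ - (S₃ + S₄) * c₂;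
                 (S₁ + S₂) * c₁ - (S₃ + S₄) * c₂,
                 S₁ - S₂ - S₃ + S₄]) :
    NegDef Ψ ↔
      (S₂ * (z - 1) ^ 2 - S₁ * (z + 1) ^ 2 < 0 ∧
       NegDef Θ ∧
       S₃ * (1 - c₂ * h) ^ 2 - S₄ * (1 + c₂ * h) ^ 2 < 0) := by
  subst hS hH hG hΨ hΘ
  exact psiTilde_negdef_iff_blocks_general c₁ c₂ z h S₁ S₂ S₃ S₄
end

section
/- Let c₁, c₂ > 0, g > 0, h > 0, and set z = c₁g. Then there exist S₁, S₂, S₃, S₄ > 0 such that the 4×4 symmetric matrix Ψ̃(c₁,z) = HᵀSH − GᵀSG is negative definite, where S = diag(S₁, S₂, S₃, S₄), H is the 4×4 matrix with rows (0, c₁, 1, 0), (1−z, 0, 0, 0), (0, 0, 0, 1−c₂h), (0, −c₂, 1, 0), and G is the 4×4 matrix with rows (1+z, 0, 0, 0), (0, −c₁, 1, 0), (0, c₂, 1, 0), (0, 0, 0, 1+c₂h). -/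
/-!
Equal weights `S₁ = S₂` annihilate the contribution of `c₁` to the diagonal of `Ψ̃`, and the only
off-diagonal entry is then cancelled by fixing the sum `S₃ + S₄`. What remains is a diagonal matrix,
negative as soon as `z > 0`, `S₄ < S₃` and `S₃ (1 - c₂h)² < S₄ (1 + c₂h)²`. Since
`(1 - c₂h)² < (1 + c₂h)²`, the last two conditions hold together for `S₃` slightly larger than `S₄`.
-/

open Matrix

theorem negDef_of_posDef_neg {n : ℕ} {M : Matrix (Fin n) (Fin n) ℝ} (hM : (-M).PosDef) :
    NegDef M := fun ξ hξ => by
  simpa [neg_mulVec] using hM.dotProduct_mulVec_pos hξ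

theorem negDef_diagonal {n : ℕ} {d : Fin n → ℝ} (hd : ∀ i, d i < 0) : NegDef (diagonal d) :=
  negDef_of_posDef_neg <| by
    rw [diagonal_neg]
    exact PosDef.diagonal fun i => neg_pos.mpr (hd i)

theorem exists_add_eq_and_mul_lt_mul {K : Type*} [Field K] [LinearOrder K] [IsStrictOrderedRing K]
    {a b t : K} (ha : 0 ≤ a) (hab : a < b) (ht : 0 < t) :
    ∃ x y, 0 < y ∧ y < x ∧ x + y = t ∧ x * a < y * b := by
  have hsum : 0 < a + b := by linarith
  have hlt : t * a / (a + b) < t / 2 := by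
    rw [div_lt_div_iff₀ hsum two_pos]
    linarith [mul_lt_mul_of_pos_left hab ht]
  obtain ⟨y, hy_lower, hy_upper⟩ := exists_between hlt
  have hy_pos : 0 < y := lt_of_le_of_lt (by positivity) hy_lower
  rw [div_lt_iff₀ hsum] at hy_lower
  exact ⟨t - y, y, hy_pos, by linarith, sub_add_cancel t y, by linarith⟩

/-- The matrix `Ψ̃ = HᵀSH − GᵀSG` of the stability LMI of the closed-loop wave system, for
`S = diag(S₁, S₂, S₃, S₄)`. The controller gain `h` enters only through `k = c₂ h`. -/
def stabilityMatrix {R : Type*} [CommRing R] (c₁ c₂ z k S₁ S₂ S₃ S₄ : R) :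
    Matrix (Fin 4) (Fin 4) R :=
  let H : Matrix (Fin 4) (Fin 4) R :=
    !![0, c₁, 1, 0; 1 - z, 0, 0, 0; 0, 0, 0, 1 - k; 0, -c₂, 1, 0]
  let G : Matrix (Fin 4) (Fin 4) R :=
    !![1 + z, 0, 0, 0; 0, -c₁, 1, 0; 0, c₂, 1, 0; 0, 0, 0, 1 + k]
  Hᵀ * diagonal ![S₁, S₂, S₃, S₄] * H - Gᵀ * diagonal ![S₁, S₂, S₃, S₄] * G

section StabilityMatrix

variable {R : Type*} [CommRing R] (c₁ c₂ z k : R)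

theorem stabilityMatrix_eq (S₁ S₂ S₃ S₄ : R) :
    stabilityMatrix c₁ c₂ z k S₁ S₂ S₃ S₄ =
      !![S₂ * (1 - z) ^ 2 - S₁ * (1 + z) ^ 2, 0, 0, 0;
         0, (S₁ - S₂) * c₁ ^ 2 - (S₃ - S₄) * c₂ ^ 2, (S₁ + S₂) * c₁ - (S₃ + S₄) * c₂, 0;
         0, (S₁ + S₂) * c₁ - (S₃ + S₄) * c₂, (S₁ - S₂) - (S₃ - S₄), 0;
         0, 0, 0, S₃ * (1 - k) ^ 2 - S₄ * (1 + k) ^ 2] := by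
  ext i j
  simp only [stabilityMatrix, Matrix.sub_apply, mul_apply (M := _ * _), mul_diagonal,
    transpose_apply, Fin.sum_univ_four]
  fin_cases i <;> fin_cases j <;>
    simp only [Fin.zero_eta, Fin.mk_one, Fin.reduceFinMk, of_apply, cons_val',
      cons_val_fin_one, cons_val] <;>
    ring

theorem stabilityMatrix_eq_diagonal {s S₃ S₄ : R} (hS : (S₃ + S₄) * c₂ = 2 * s * c₁) :
    stabilityMatrix c₁ c₂ z k s s S₃ S₄ =
      diagonal ![-(4 * s * z), -((S₃ - S₄) * c₂ ^ 2), -(S₃ - S₄),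
        S₃ * (1 - k) ^ 2 - S₄ * (1 + k) ^ 2] := by
  have hcross : (s + s) * c₁ - (S₃ + S₄) * c₂ = 0 := by rw [hS]; ring
  have hz : s * (1 - z) ^ 2 - s * (1 + z) ^ 2 = -(4 * s * z) := by ring
  rw [stabilityMatrix_eq, hcross, hz]
  ext i j
  fin_cases i <;> fin_cases j <;> simp

end StabilityMatrix

theorem negDef_stabilityMatrix {c₁ c₂ z k s S₃ S₄ : ℝ} (hc₂ : c₂ ≠ 0) (hz : 0 < z) (hs : 0 < s)
    (hS : (S₃ + S₄) * c₂ = 2 * s * c₁) (hlt : S₄ < S₃)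
    (hk : S₃ * (1 - k) ^ 2 < S₄ * (1 + k) ^ 2) :
    NegDef (stabilityMatrix c₁ c₂ z k s s S₃ S₄) := by
  rw [stabilityMatrix_eq_diagonal c₁ c₂ z k hS]
  have hdiff : 0 < S₃ - S₄ := sub_pos.mpr hlt
  refine negDef_diagonal fun i => ?_
  fin_cases i
  · exact neg_neg_of_pos (by positivity)
  · exact neg_neg_of_pos (by positivity)
  · exact neg_neg_of_pos hdiff
  · exact sub_neg.mpr hk

/-- Feasibility of the stability LMI for a stable wave (`g > 0`) and a damping controller
(`h > 0`): there exist positive `S₁, S₂, S₃, S₄` making `Ψ̃ = HᵀSH − GᵀSG` negative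
definite, where `z = c₁ g`. -/
theorem stable_wave_lmi_feasible
    (c₁ c₂ g h z : ℝ) (hc₁ : 0 < c₁) (hc₂ : 0 < c₂) (hg : 0 < g) (hh : 0 < h)
    (hz : z = c₁ * g)
    (H : Matrix (Fin 4) (Fin 4) ℝ)
    (hH : H = !![0, c₁, 1, 0;
                 1 - z, 0, 0, 0;
                 0, 0, 0, 1 - c₂ * h;
                 0, -c₂, 1, 0])
    (G : Matrix (Fin 4) (Fin 4) ℝ)
    (hG : G = !![1 + z, 0, 0, 0;
                 0, -c₁, 1, 0;
                 0, c₂, 1, 0;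
                 0, 0, 0, 1 + c₂ * h]) :
    ∃ S₁ S₂ S₃ S₄ : ℝ, 0 < S₁ ∧ 0 < S₂ ∧ 0 < S₃ ∧ 0 < S₄ ∧
      NegDef (Hᵀ * Matrix.diagonal ![S₁, S₂, S₃, S₄] * H -
              Gᵀ * Matrix.diagonal ![S₁, S₂, S₃, S₄] * G) := by
  have hz_pos : 0 < z := hz ▸ mul_pos hc₁ hg
  have hdamping : (1 - c₂ * h) ^ 2 < (1 + c₂ * h) ^ 2 := by
    linarith [mul_pos hc₂ hh]
  obtain ⟨S₃, S₄, hS₄, hlt, hsum, hk⟩ :=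
    exists_add_eq_and_mul_lt_mul (sq_nonneg _) hdamping (div_pos hc₁ hc₂)
  have hbalance : (S₃ + S₄) * c₂ = 2 * (1 / 2) * c₁ := by
    rw [hsum, div_mul_cancel₀ c₁ hc₂.ne']
    ring
  subst hH hG
  exact ⟨1 / 2, 1 / 2, S₃, S₄, one_half_pos, one_half_pos, hS₄.trans hlt, hS₄,
    negDef_stabilityMatrix hc₂.ne' hz_pos one_half_pos hbalance hlt hk⟩
end

section
/- Let c₂ > 0, let S₁, S₂, S₃, S₄ > 0 with S₂ < S₁, and let 0 < c_min ≤ c_max. For c ∈ ℝ let Θ(c) be the symmetric 2×2 matrix with entries Θ₁₁ = (S₁−S₂)c² − (S₃−S₄)c₂², Θ₁₂ = Θ₂₁ = (S₁+S₂)c − (S₃+S₄)c₂, Θ₂₂ = S₁−S₂−S₃+S₄. If Θ(c_min) and Θ(c_max) are negative definite, then Θ(c) is negative definite for every c ∈ [c_min, c_max]. -/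
/-!
For a fixed vector `ξ`, the value `ξᵀ Θ(c) ξ` is a quadratic polynomial in `c` whose leading
coefficient `(S₁ - S₂) ξ₀²` is nonnegative, hence a convex function of `c`. The speeds at which it
is negative therefore form an interval, and so does the intersection of these intervals over all
`ξ ≠ 0`. This takes the place of the Schur complement argument.
-/

open Matrix

/-- The middle block `Θ(c)` of the stability matrix, as a function of the plant speed `c`; the
argument `c₂` is the controller speed. -/
def theta (c₂ S₁ S₂ S₃ S₄ c : ℝ) : Matrix (Fin 2) (Fin 2) ℝ :=
  !![(S₁ - S₂) * c ^ 2 - (S₃ - S₄) * c₂ ^ 2, (S₁ + S₂) * c - (S₃ + S₄) * c₂;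
     (S₁ + S₂) * c - (S₃ + S₄) * c₂, S₁ - S₂ - S₃ + S₄]

section Quadratic

variable {𝕜 : Type*} [Field 𝕜] [LinearOrder 𝕜] [IsStrictOrderedRing 𝕜]

theorem convexOn_quadratic (a b : 𝕜) {q : 𝕜} (hq : 0 ≤ q) :
    ConvexOn 𝕜 Set.univ fun c : 𝕜 => a + c * b + c ^ 2 * q := by
  have linear : ConvexOn 𝕜 Set.univ fun c : 𝕜 => c * b :=
    (LinearMap.mulRight 𝕜 b).convexOn convex_univ
  have square : ConvexOn 𝕜 Set.univ fun c : 𝕜 => c ^ 2 * q := by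
    simpa only [smul_eq_mul, mul_comm] using even_two.convexOn_pow.smul hq
  exact ((convexOn_const a convex_univ).add linear).add square

theorem convexOn_dotProduct_quadratic_mulVec {ι : Type*} [Fintype ι] (A B : Matrix ι ι 𝕜)
    {Q : Matrix ι ι 𝕜} {ξ : ι → 𝕜} (hQ : 0 ≤ ξ ⬝ᵥ Q *ᵥ ξ) :
    ConvexOn 𝕜 Set.univ fun c : 𝕜 => ξ ⬝ᵥ (A + c • B + c ^ 2 • Q) *ᵥ ξ := by
  simpa only [add_mulVec, smul_mulVec, dotProduct_add, dotProduct_smul, smul_eq_mul] using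
    convexOn_quadratic (ξ ⬝ᵥ A *ᵥ ξ) (ξ ⬝ᵥ B *ᵥ ξ) hQ

end Quadratic

theorem convex_setOf_negDef {n : ℕ} {E : Type*} [AddCommMonoid E] [SMul ℝ E] {s : Set E}
    {M : E → Matrix (Fin n) (Fin n) ℝ} (hM : ∀ ξ, ConvexOn ℝ s fun x => ξ ⬝ᵥ M x *ᵥ ξ) :
    Convex ℝ {x ∈ s | NegDef (M x)} := by
  intro x hx y hy a b ha hb hab
  refine ⟨(hM 0).1 hx.1 hy.1 ha hb hab, fun ξ hξ => ?_⟩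
  exact ((hM ξ).2 hx.1 hy.1 ha hb hab).trans_lt
    (convex_Iio (0 : ℝ) (hx.2 ξ hξ) (hy.2 ξ hξ) ha hb hab)

theorem convex_setOf_negDef_quadratic {n : ℕ} (A B : Matrix (Fin n) (Fin n) ℝ)
    {Q : Matrix (Fin n) (Fin n) ℝ} (hQ : ∀ ξ, 0 ≤ ξ ⬝ᵥ Q *ᵥ ξ) :
    Convex ℝ {c : ℝ | NegDef (A + c • B + c ^ 2 • Q)} := by
  simpa only [Set.mem_univ, true_and] using
    convex_setOf_negDef fun ξ => convexOn_dotProduct_quadratic_mulVec A B (hQ ξ)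

theorem theta_eq_quadratic (c₂ S₁ S₂ S₃ S₄ c : ℝ) :
    theta c₂ S₁ S₂ S₃ S₄ c =
      !![-((S₃ - S₄) * c₂ ^ 2), -((S₃ + S₄) * c₂); -((S₃ + S₄) * c₂), S₁ - S₂ - S₃ + S₄] +
        c • !![0, S₁ + S₂; S₁ + S₂, 0] + c ^ 2 • diagonal ![S₁ - S₂, 0] := by
  ext i j
  fin_cases i <;> fin_cases j <;> simp [theta] <;> ring

theorem theta_negdef_on_interval_general (c₂ S₃ S₄ : ℝ) {S₁ S₂ : ℝ} (hS : S₂ ≤ S₁) :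
    Convex ℝ {c : ℝ | NegDef (theta c₂ S₁ S₂ S₃ S₄ c)} := by
  have leading_posSemidef : (diagonal ![S₁ - S₂, 0]).PosSemidef :=
    PosSemidef.diagonal (by simpa [Pi.le_def, Fin.forall_fin_two] using hS)
  simp only [theta_eq_quadratic]
  exact convex_setOf_negDef_quadratic _ _ leading_posSemidef.dotProduct_mulVec_nonneg

/-- Convexity-in-speed step of the robustness theorem: if the middle block
`Θ(c)` of the stability matrix is negative definite at the extreme speeds `c_min` and
`c_max` (and `S₂ < S₁`), then it is negative definite for every speed
`c ∈ [c_min, c_max]`. -/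
theorem theta_negdef_on_interval
    (c₂ S₁ S₂ S₃ S₄ cmin cmax : ℝ) (hc₂ : 0 < c₂)
    (hS₁ : 0 < S₁) (hS₂ : 0 < S₂) (hS₃ : 0 < S₃) (hS₄ : 0 < S₄)
    (hS₂₁ : S₂ < S₁) (hcmin : 0 < cmin) (hminmax : cmin ≤ cmax)
    (Θ : ℝ → Matrix (Fin 2) (Fin 2) ℝ)
    (hΘ : ∀ c : ℝ, Θ c = !![(S₁ - S₂) * c ^ 2 - (S₃ - S₄) * c₂ ^ 2,
                            (S₁ + S₂) * c - (S₃ + S₄) * c₂;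
                            (S₁ + S₂) * c - (S₃ + S₄) * c₂,
                            S₁ - S₂ - S₃ + S₄])
    (hmin : NegDef (Θ cmin)) (hmax : NegDef (Θ cmax)) :
    ∀ c ∈ Set.Icc cmin cmax, NegDef (Θ c) := by
  obtain rfl : Θ = theta c₂ S₁ S₂ S₃ S₄ := funext hΘ
  exact (theta_negdef_on_interval_general c₂ S₃ S₄ hS₂₁.le).ordConnected.out hmin hmax
end
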